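/- arXiv:math/0606451 — 3 statements merged into one kernel-verified Lean document; each statement's English description precedes it below -/
import Mathlib

section
/- Let k, ℓ ≥ 2 and let b₁, …, b_{k−1} and c₁, …, c_{ℓ−1} be positive integers with b₁ = min(b₁,…,b_{k−1}) and c₁ = min(c₁,…,c_{ℓ−1}). Suppose t = b₁ = c₁, and set q = b₂ + ⋯ + b_{k−1} and s = c₂ + ⋯ + c_{ℓ−1}, with q ≥ s. Then there exists a 2-coloring χ : {1, …, t(t+q)(t+s)+s−1} → {0,1} such that there is no solution x₁,…,x_k in {1,…,t(t+q)(t+s)+s−1} to b₁x₁ + ⋯ + b_{k−1}x_{k−1} = x_k with χ(x₁) = ⋯ = χ(x_k) = 0, and no solution y₁,…,y_ℓ in {1,…,t(t+q)(t+s)+s−1} to c₁y₁ + ⋯ + c_{ℓ−1}y_{ℓ−1} = y_ℓ with χ(y₁) = ⋯ = χ(y_ℓ) = 1. Consequently RR(b₁x₁+⋯+b_{k−1}x_{k−1}=x_k, c₁y₁+⋯+c_{ℓ−1}y_{ℓ−1}=y_ℓ) ≥ t(t+q)(t+s)+s. -/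
/-!
Write `B = ∑ bᵢ = t + q` and `C = ∑ cⱼ = t + s`, and give color 0 exactly to the integers in
`[C, BC)`. A left-hand side with all `xᵢ ≥ C` is at least `BC`, so the first equation has no
solution of color 0. In a solution of the second equation of color 1, the right-hand side is at
least `C`, hence at least `BC ≥ C²`; as a weighted sum of total weight `C`, it forces some
`yⱼ ≥ C`, hence `yⱼ ≥ BC`. As the other variables are at least `1`, the right-hand side is
at least `cⱼ(BC - 1) + C ≥ tBC + s`.
-/

open Finset

section WeightedSums

variable {ι R : Type*} {S : Finset ι} {w y : ι → R}

theorem exists_le_of_sum_mul_le_sum_mul [Semiring R] [LinearOrder R] [IsStrictOrderedRing R] {m : R}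
    (hw : ∀ i ∈ S, 0 ≤ w i) (hpos : 0 < ∑ i ∈ S, w i)
    (h : (∑ i ∈ S, w i) * m ≤ ∑ i ∈ S, w i * y i) : ∃ i ∈ S, m ≤ y i := by
  by_contra! hlt
  obtain ⟨j, hj, hwj⟩ : ∃ j ∈ S, 0 < w j := exists_lt_of_sum_lt (by simpa using hpos)
  refine h.not_gt ?_
  rw [sum_mul]
  exact sum_lt_sum (fun i hi ↦ mul_le_mul_of_nonneg_left (hlt i hi).le (hw i hi))
    ⟨j, hj, mul_lt_mul_of_pos_left (hlt j hj) hwj⟩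

theorem sum_add_mul_le_sum_mul_add [CommSemiring R] [PartialOrder R] [IsOrderedRing R]
    [ExistsAddOfLE R] [AddLeftReflectLE R]
    {t : R} {j : ι} (hw : ∀ i ∈ S, 0 ≤ w i) (hy : ∀ i ∈ S, 1 ≤ y i) (hj : j ∈ S) (ht : t ≤ w j) :
    ∑ i ∈ S, w i + t * y j ≤ ∑ i ∈ S, w i * y i + t := by
  classical
  have hrest : ∑ i ∈ S.erase j, w i ≤ ∑ i ∈ S.erase j, w i * y i := sum_le_sum fun i hi ↦
    le_mul_of_one_le_right (hw i (mem_of_mem_erase hi)) (hy i (mem_of_mem_erase hi))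
  have hterm : t * y j + w j * 1 ≤ t * 1 + w j * y j :=
    mul_add_mul_le_mul_add_mul ht (hy j hj)
  rw [← add_sum_erase S w hj, ← add_sum_erase S (fun i ↦ w i * y i) hj]
  calc w j + ∑ i ∈ S.erase j, w i + t * y j
      = (t * y j + w j * 1) + ∑ i ∈ S.erase j, w i := by ring
    _ ≤ (t * 1 + w j * y j) + ∑ i ∈ S.erase j, w i * y i := add_le_add hterm hrest
    _ = w j * y j + ∑ i ∈ S.erase j, w i * y i + t := by ring

end WeightedSums

/-- The equation `∑ i, a i * x i = z` has a solution with all of its values in `S` and of the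
color `γ` under `χ`. Colorings are total on `ℕ`, but only the values of `χ` on `S` matter. -/
def HasMonochromaticSolution {ι α : Type*} [Fintype ι] (a : ι → ℕ) (S : Finset ℕ) (χ : ℕ → α)
    (γ : α) : Prop :=
  ∃ (x : ι → ℕ) (z : ℕ),
    (∀ i, x i ∈ S) ∧ z ∈ S ∧ ∑ i, a i * x i = z ∧ (∀ i, χ (x i) = γ) ∧ χ z = γ

/-- The 2-coloring in which the integers of color 0 are those of the interval `[m, n)`; it serves
as the extremal coloring, with `m = ∑ j, c j` and `n = (∑ i, b i) * m`. -/
def intervalColoring (m n : ℕ) : ℕ → Fin 2 := fun a ↦ if m ≤ a ∧ a < n then 0 else 1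

theorem intervalColoring_eq_zero_iff {m n a : ℕ} :
    intervalColoring m n a = 0 ↔ m ≤ a ∧ a < n := by
  simp [intervalColoring]

theorem intervalColoring_eq_one_iff {m n a : ℕ} :
    intervalColoring m n a = 1 ↔ (m ≤ a → n ≤ a) := by
  simp [intervalColoring]

section

variable {ι κ : Type*} [Fintype ι] [Fintype κ] {b : ι → ℕ} {c : κ → ℕ}

theorem not_hasMonochromaticSolution_intervalColoring_zero {S : Finset ℕ} {m n : ℕ}
    (hn : n ≤ (∑ i, b i) * m) :
    ¬ HasMonochromaticSolution b S (intervalColoring m n) 0 := by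
  rintro ⟨x, z, -, -, hxz, hx, hz⟩
  have hz_lt : z < n := (intervalColoring_eq_zero_iff.1 hz).2
  have hz_ge : (∑ i, b i) * m ≤ z := by
    rw [← hxz, sum_mul]
    exact sum_le_sum fun i _ ↦ Nat.mul_le_mul_left _ (intervalColoring_eq_zero_iff.1 (hx i)).1
  omega

theorem le_sum_mul_of_intervalColoring_eq_one {t s n : ℕ} {y : κ → ℕ} (htc : ∀ j, t ≤ c j)
    (hsum : ∑ j, c j = t + s) (hn : (t + s) * (t + s) ≤ n) (hy : ∀ j, 1 ≤ y j)
    (hy_one : ∀ j, intervalColoring (t + s) n (y j) = 1)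
    (hz_one : intervalColoring (t + s) n (∑ j, c j * y j) = 1) :
    t * n + s ≤ ∑ j, c j * y j := by
  rcases Nat.eq_zero_or_pos (t + s) with hzero | hpos
  · obtain ⟨rfl, rfl⟩ := Nat.add_eq_zero_iff.1 hzero
    simp
  have hz_ge : t + s ≤ ∑ j, c j * y j :=
    hsum ▸ sum_le_sum fun j _ ↦ Nat.le_mul_of_pos_right _ (hy j)
  have hz_ge_n : n ≤ ∑ j, c j * y j := intervalColoring_eq_one_iff.1 hz_one hz_ge
  obtain ⟨j, -, hj⟩ : ∃ j ∈ univ, t + s ≤ y j :=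
    exists_le_of_sum_mul_le_sum_mul (fun j _ ↦ Nat.zero_le (c j)) (hsum ▸ hpos)
      (by rw [hsum]; exact hn.trans hz_ge_n)
  have hj_ge_n : n ≤ y j := intervalColoring_eq_one_iff.1 (hy_one j) hj
  have hlarge : t + s + t * y j ≤ ∑ j, c j * y j + t :=
    hsum ▸ sum_add_mul_le_sum_mul_add (fun j _ ↦ Nat.zero_le (c j)) (fun j _ ↦ hy j)
      (mem_univ j) (htc j)
  have hmul : t * n ≤ t * y j := Nat.mul_le_mul_left t hj_ge_n
  omega

theorem not_hasMonochromaticSolution_intervalColoring_one {t s n : ℕ} {S : Finset ℕ}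
    (htc : ∀ j, t ≤ c j) (hsum : ∑ j, c j = t + s) (hn : (t + s) * (t + s) ≤ n)
    (hS : S ⊆ Ico 1 (t * n + s)) :
    ¬ HasMonochromaticSolution c S (intervalColoring (t + s) n) 1 := by
  rintro ⟨y, _, hy, hz, rfl, hy_one, hz_one⟩
  exact (mem_Ico.1 (hS hz)).2.not_ge <| le_sum_mul_of_intervalColoring_eq_one htc hsum hn
    (fun j ↦ (mem_Ico.1 (hS (hy j))).1) hy_one hz_one

theorem exists_coloring_not_hasMonochromaticSolution {t s : ℕ} (htc : ∀ j, t ≤ c j)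
    (hsum : ∑ j, c j = t + s) (hle : t + s ≤ ∑ i, b i) :
    ∃ χ : ℕ → Fin 2, ∀ S ⊆ Ico 1 (t * (∑ i, b i) * (t + s) + s),
      ¬ HasMonochromaticSolution b S χ 0 ∧ ¬ HasMonochromaticSolution c S χ 1 := by
  rw [mul_assoc]
  exact ⟨intervalColoring (t + s) ((∑ i, b i) * (t + s)), fun S hS ↦
    ⟨not_hasMonochromaticSolution_intervalColoring_zero le_rfl,
      not_hasMonochromaticSolution_intervalColoring_one htc hsum
        (Nat.mul_le_mul_right _ hle) hS⟩⟩

theorem off_diagonal_rado_lower_bound_general {t s : ℕ} (htc : ∀ j, t ≤ c j)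
    (hsum : ∑ j, c j = t + s) (hle : t + s ≤ ∑ i, b i) :
    (∃ χ : ℕ → Fin 2,
      ¬ HasMonochromaticSolution b (Icc 1 (t * (∑ i, b i) * (t + s) + s - 1)) χ 0 ∧
      ¬ HasMonochromaticSolution c (Icc 1 (t * (∑ i, b i) * (t + s) + s - 1)) χ 1) ∧
    ∀ M : ℕ,
      (∀ χ : ℕ → Fin 2,
        HasMonochromaticSolution b (Icc 1 M) χ 0 ∨ HasMonochromaticSolution c (Icc 1 M) χ 1) →
      t * (∑ i, b i) * (t + s) + s ≤ M := by
  obtain ⟨χ, hχ⟩ := exists_coloring_not_hasMonochromaticSolution htc hsum hle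
  refine ⟨⟨χ, hχ _ fun a ha ↦ ?_⟩, fun M hM ↦ ?_⟩
  · rw [mem_Icc] at ha
    rw [mem_Ico]
    omega
  · by_contra! hlt
    obtain ⟨hb, hc⟩ := hχ (Icc 1 M) fun a ha ↦
      mem_Ico.2 ⟨(mem_Icc.1 ha).1, (mem_Icc.1 ha).2.trans_lt hlt⟩
    exact (hM χ).elim hb hc

end

/-- Theorem 2.1: lower bound for the off-diagonal Rado number of the equations
`b₁x₁ + ⋯ + b_{k-1}x_{k-1} = x_k` and `c₁y₁ + ⋯ + c_{ℓ-1}y_{ℓ-1} = y_ℓ`,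
where `b₁ = c₁ = t` are the minimal coefficients, `q = b₂ + ⋯ + b_{k-1}`,
`s = c₂ + ⋯ + c_{ℓ-1}`, and `q ≥ s`. There is a 2-coloring of
`[1, t(t+q)(t+s)+s-1]` with no solution to the first equation monochromatic of
color 0 and no solution to the second monochromatic of color 1; consequently
`RR ≥ t(t+q)(t+s)+s`. -/
theorem off_diagonal_rado_lower_bound (k ℓ : ℕ) (hk : 2 ≤ k) (hl : 2 ≤ ℓ)
    (b : Fin (k - 1) → ℕ) (c : Fin (ℓ - 1) → ℕ)
    (hb : ∀ i, 0 < b i) (hc : ∀ i, 0 < c i)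
    (hbmin : ∀ i, b ⟨0, by omega⟩ ≤ b i)
    (hcmin : ∀ i, c ⟨0, by omega⟩ ≤ c i)
    (t q s : ℕ)
    (htb : t = b ⟨0, by omega⟩) (htc : t = c ⟨0, by omega⟩)
    (hq : q = ∑ i ∈ Finset.univ.erase ⟨0, by omega⟩, b i)
    (hs : s = ∑ i ∈ Finset.univ.erase ⟨0, by omega⟩, c i)
    (hqs : s ≤ q) :
    (∃ χ : ℕ → Fin 2,
      (¬ ∃ (x : Fin (k - 1) → ℕ) (xk : ℕ),
        (∀ i, x i ∈ Finset.Icc 1 (t * (t + q) * (t + s) + s - 1)) ∧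
        xk ∈ Finset.Icc 1 (t * (t + q) * (t + s) + s - 1) ∧
        (∑ i, b i * x i) = xk ∧ (∀ i, χ (x i) = 0) ∧ χ xk = 0) ∧
      (¬ ∃ (y : Fin (ℓ - 1) → ℕ) (yl : ℕ),
        (∀ i, y i ∈ Finset.Icc 1 (t * (t + q) * (t + s) + s - 1)) ∧
        yl ∈ Finset.Icc 1 (t * (t + q) * (t + s) + s - 1) ∧
        (∑ i, c i * y i) = yl ∧ (∀ i, χ (y i) = 1) ∧ χ yl = 1)) ∧
    (∀ M : ℕ, 0 < M →
      (∀ χ : ℕ → Fin 2,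
        (∃ (x : Fin (k - 1) → ℕ) (xk : ℕ),
          (∀ i, x i ∈ Finset.Icc 1 M) ∧ xk ∈ Finset.Icc 1 M ∧
          (∑ i, b i * x i) = xk ∧ (∀ i, χ (x i) = 0) ∧ χ xk = 0) ∨
        (∃ (y : Fin (ℓ - 1) → ℕ) (yl : ℕ),
          (∀ i, y i ∈ Finset.Icc 1 M) ∧ yl ∈ Finset.Icc 1 M ∧
          (∑ i, c i * y i) = yl ∧ (∀ i, χ (y i) = 1) ∧ χ yl = 1)) →
      t * (t + q) * (t + s) + s ≤ M) := by
  have hb_sum : ∑ i, b i = t + q := by rw [hq, htb, add_sum_erase _ _ (mem_univ _)]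
  have hc_sum : ∑ j, c j = t + s := by rw [hs, htc, add_sum_erase _ _ (mem_univ _)]
  rw [← hb_sum]
  have hgeneral := off_diagonal_rado_lower_bound_general (b := b) (fun j ↦ htc ▸ hcmin j) hc_sum
    (hb_sum ▸ Nat.add_le_add_left hqs t)
  exact ⟨hgeneral.1, fun M _ ↦ hgeneral.2 M⟩
end

section
/- For every positive integer q, RR_1(q,1) = 2q + 2⌊(q+1)/2⌋ + 1. That is, 2q + 2⌊(q+1)/2⌋ + 1 is the least positive integer N such that every 2-coloring χ of {1,…,N} admits x, y, z ∈ {1,…,N} with x + qy = z and χ(x) = χ(y) = χ(z) = 0, or x, y, z ∈ {1,…,N} with x + y = z and χ(x) = χ(y) = χ(z) = 1. -/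
/-!
Only the two colour classes matter: a set `A` without solutions of `x + q * y = z` and a sum-free
set `B`. Suppose they cover `{1, …, N}`. If `1 ∈ A`, a short chain of forced memberships is already
contradictory within `{1, …, 2q + 3}`. If `1 ∈ B`, then `2 ∈ A` and `2q + 2 ∈ B`, and every odd
number up to `2⌊(q + 1) / 2⌋ + 1` is forced into `B`; but `2q + 2` is the sum of the odd numbers
`2⌊q / 2⌋ + 1` and `2⌊(q + 1) / 2⌋ + 1`. Conversely, giving colour `1` to the odd numbers up to `q`
and to the even numbers from `2q + 2` on avoids all forbidden solutions below the bound.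
-/

/-- The set `S` contains no solution of the equation `x + a * y = z`, where the values of the
variables may coincide. For `a = 1` these are the sum-free sets. -/
def SolutionFree (a : ℕ) (S : Set ℕ) : Prop :=
  ∀ ⦃x y z⦄, x ∈ S → y ∈ S → z ∈ S → x + a * y ≠ z

/-- The elements of `{1, …, N}` that receive the colour `c` from `χ`. Colourings are defined on all
of `ℕ`; their values outside `{1, …, N}` are discarded here. -/
def colorClass {κ : Type*} (χ : ℕ → κ) (c : κ) (N : ℕ) : Set ℕ :=
  {n | n ∈ Finset.Icc 1 N ∧ χ n = c}

theorem not_solutionFree_colorClass_iff {κ : Type*} {χ : ℕ → κ} {c : κ} {a N : ℕ} :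
    ¬ SolutionFree a (colorClass χ c N) ↔
      ∃ x y z : ℕ, x ∈ Finset.Icc 1 N ∧ y ∈ Finset.Icc 1 N ∧ z ∈ Finset.Icc 1 N ∧
        x + a * y = z ∧ χ x = c ∧ χ y = c ∧ χ z = c := by
  simp only [SolutionFree, colorClass, Set.mem_ofPred_eq]
  push Not
  exact ⟨fun ⟨x, y, z, ⟨hx, cx⟩, ⟨hy, cy⟩, ⟨hz, cz⟩, h⟩ => ⟨x, y, z, hx, hy, hz, h, cx, cy, cz⟩,
    fun ⟨x, y, z, hx, hy, hz, h, cx, cy, cz⟩ => ⟨x, y, z, ⟨hx, cx⟩, ⟨hy, cy⟩, ⟨hz, cz⟩, h⟩⟩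

theorem not_solutionFree_one_colorClass_iff {κ : Type*} {χ : ℕ → κ} {c : κ} {N : ℕ} :
    ¬ SolutionFree 1 (colorClass χ c N) ↔
      ∃ x y z : ℕ, x ∈ Finset.Icc 1 N ∧ y ∈ Finset.Icc 1 N ∧ z ∈ Finset.Icc 1 N ∧
        x + y = z ∧ χ x = c ∧ χ y = c ∧ χ z = c := by
  simpa only [one_mul] using not_solutionFree_colorClass_iff (χ := χ) (c := c) (a := 1) (N := N)

theorem Icc_subset_colorClass_zero_union_one (χ : ℕ → Fin 2) (N : ℕ) :
    Set.Icc 1 N ⊆ colorClass χ 0 N ∪ colorClass χ 1 N := fun n hn =>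
  (Fin.exists_fin_two.mp ⟨χ n, rfl⟩).imp (⟨Finset.mem_Icc.mpr hn, ·⟩) (⟨Finset.mem_Icc.mpr hn, ·⟩)

section UpperBound

variable {q : ℕ} {A B : Set ℕ}

theorem not_Icc_subset_union_of_one_mem_left (hq : 0 < q) (hA : SolutionFree q A)
    (hB : SolutionFree 1 B) (one_mem : 1 ∈ A) : ¬ Set.Icc 1 (2 * q + 3) ⊆ A ∪ B := by
  intro hcover
  have q_add_one_mem : q + 1 ∈ B := (hcover ⟨by omega, by omega⟩).resolve_left fun h =>
    hA one_mem one_mem h (by ring)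
  have two_q_add_two_mem : 2 * q + 2 ∈ A := (hcover ⟨by omega, by omega⟩).resolve_right fun h =>
    hB q_add_one_mem q_add_one_mem h (by ring)
  have two_mem : 2 ∈ B := (hcover ⟨by omega, by omega⟩).resolve_left fun h =>
    hA h h two_q_add_two_mem (by ring)
  have q_add_three_mem : q + 3 ∈ A := (hcover ⟨by omega, by omega⟩).resolve_right fun h =>
    hB q_add_one_mem two_mem h (by ring)
  have three_mem : 3 ∈ B := (hcover ⟨by omega, by omega⟩).resolve_left fun h =>
    hA h one_mem q_add_three_mem (by ring)
  have q_add_two_mem : q + 2 ∈ B := (hcover ⟨by omega, by omega⟩).resolve_left fun h =>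
    hA h one_mem two_q_add_two_mem (by ring)
  have q_mem : q ∈ A := (hcover ⟨by omega, by omega⟩).resolve_right fun h =>
    hB h two_mem q_add_two_mem (by ring)
  have two_q_mem : 2 * q ∈ B := (hcover ⟨by omega, by omega⟩).resolve_left fun h =>
    hA q_mem one_mem h (by ring)
  have two_q_add_three_mem : 2 * q + 3 ∈ B := (hcover ⟨by omega, by omega⟩).resolve_left fun h =>
    hA q_add_three_mem one_mem h (by ring)
  exact hB two_q_mem three_mem two_q_add_three_mem (by ring)

theorem odd_mem_right_of_one_mem_right {m : ℕ} (hA : SolutionFree q A) (hB : SolutionFree 1 B)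
    (one_mem : 1 ∈ B) (two_mem : 2 ∈ A) (hcover : Set.Icc 1 (2 * q + 2 * m + 1) ⊆ A ∪ B) :
    ∀ j ≤ m, 2 * j + 1 ∈ B := by
  intro j
  induction j with
  | zero => exact fun _ => one_mem
  | succ j ih =>
    intro hj
    have even_mem : 2 * j + 2 ∈ A := (hcover ⟨by omega, by omega⟩).resolve_right fun h =>
      hB (ih (by omega)) one_mem h (by ring)
    have even_shift_mem : 2 * q + 2 * j + 2 ∈ B :=
      (hcover ⟨by omega, by omega⟩).resolve_left fun h => hA even_mem two_mem h (by ring)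
    have odd_shift_mem : 2 * q + 2 * j + 3 ∈ A :=
      (hcover ⟨by omega, by omega⟩).resolve_right fun h => hB even_shift_mem one_mem h (by ring)
    exact (hcover ⟨by omega, by omega⟩).resolve_left fun h => hA h two_mem odd_shift_mem (by ring)

theorem not_Icc_subset_union_of_one_mem_right (hq : 0 < q) (hA : SolutionFree q A)
    (hB : SolutionFree 1 B) (one_mem : 1 ∈ B) :
    ¬ Set.Icc 1 (2 * q + 2 * ((q + 1) / 2) + 1) ⊆ A ∪ B := by
  intro hcover
  have two_mem : 2 ∈ A := (hcover ⟨by omega, by omega⟩).resolve_right fun h =>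
    hB one_mem one_mem h (by ring)
  have two_q_add_two_mem : 2 * q + 2 ∈ B := (hcover ⟨by omega, by omega⟩).resolve_left fun h =>
    hA two_mem two_mem h (by ring)
  have odd_mem := odd_mem_right_of_one_mem_right hA hB one_mem two_mem hcover
  exact hB (odd_mem (q / 2) (by omega)) (odd_mem ((q + 1) / 2) le_rfl) two_q_add_two_mem (by omega)

theorem not_Icc_subset_union_of_solutionFree (hq : 0 < q) (hA : SolutionFree q A)
    (hB : SolutionFree 1 B) : ¬ Set.Icc 1 (2 * q + 2 * ((q + 1) / 2) + 1) ⊆ A ∪ B := by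
  intro hcover
  rcases hcover ⟨le_rfl, by omega⟩ with one_mem | one_mem
  · exact not_Icc_subset_union_of_one_mem_left hq hA hB one_mem
      ((Set.Icc_subset_Icc_right (by omega)).trans hcover)
  · exact not_Icc_subset_union_of_one_mem_right hq hA hB one_mem hcover

end UpperBound

section LowerBound

/-- The colouring showing that the bound is sharp: colour `1` on the odd numbers up to `q` and on
the even numbers from `2 * q + 2` on, colour `0` elsewhere. -/
def extremalColoring (q n : ℕ) : Fin 2 :=
  if (n ≤ q ∧ n % 2 = 1) ∨ (2 * q + 2 ≤ n ∧ n % 2 = 0) then 1 else 0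

variable {q n N : ℕ}

theorem extremalColoring_eq_one_iff :
    extremalColoring q n = 1 ↔ (n ≤ q ∧ n % 2 = 1) ∨ (2 * q + 2 ≤ n ∧ n % 2 = 0) := by
  simp only [extremalColoring, ite_eq_left_iff, zero_ne_one, imp_false, not_not]

theorem extremalColoring_eq_zero_iff :
    extremalColoring q n = 0 ↔ ¬ ((n ≤ q ∧ n % 2 = 1) ∨ (2 * q + 2 ≤ n ∧ n % 2 = 0)) := by
  simp only [extremalColoring, ite_eq_right_iff, one_ne_zero, imp_false]

theorem solutionFree_colorClass_extremalColoring_zero (hN : N ≤ 2 * q + 2 * ((q + 1) / 2)) :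
    SolutionFree q (colorClass (extremalColoring q) 0 N) := by
  rintro x y z ⟨hx, cx⟩ ⟨hy, cy⟩ ⟨hz, cz⟩ hxyz
  rw [Finset.mem_Icc] at hx hy hz
  rw [extremalColoring_eq_zero_iff] at cx cy cz
  have one_lt_y : 1 < y := by omega
  obtain rfl | three_le_y : y = 2 ∨ 3 ≤ y := by omega
  · have x_odd : x % 2 = 1 := by omega
    have x_le : x ≤ 2 * ((q + 1) / 2) := by omega
    omega
  · have q_mul_le : q * 3 ≤ q * y := Nat.mul_le_mul_left q three_le_y
    have x_eq_one : x = 1 := by omega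
    omega

theorem solutionFree_colorClass_extremalColoring_one (hN : N ≤ 4 * q + 3) :
    SolutionFree 1 (colorClass (extremalColoring q) 1 N) := by
  rintro x y z ⟨-, cx⟩ ⟨-, cy⟩ ⟨hz, cz⟩ hxyz
  rw [Finset.mem_Icc] at hz
  rw [extremalColoring_eq_one_iff] at cx cy cz
  omega

end LowerBound

/-- Theorem 3.1, case `s = 1`: `RR_1(q,1) = 2q + 2⌊(q+1)/2⌋ + 1`. -/
theorem RR_one_q_one (q : ℕ) (hq : 0 < q) :
    IsLeast {N : ℕ | 0 < N ∧ ∀ χ : ℕ → Fin 2,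
      (∃ x y z : ℕ, x ∈ Finset.Icc 1 N ∧ y ∈ Finset.Icc 1 N ∧
        z ∈ Finset.Icc 1 N ∧ x + q * y = z ∧ χ x = 0 ∧ χ y = 0 ∧ χ z = 0) ∨
      (∃ x y z : ℕ, x ∈ Finset.Icc 1 N ∧ y ∈ Finset.Icc 1 N ∧
        z ∈ Finset.Icc 1 N ∧ x + y = z ∧ χ x = 1 ∧ χ y = 1 ∧ χ z = 1)}
      (2 * q + 2 * ((q + 1) / 2) + 1) := by
  simp only [← not_solutionFree_colorClass_iff, ← not_solutionFree_one_colorClass_iff,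
    ← not_and_or]
  constructor
  · exact ⟨by omega, fun χ ⟨hA, hB⟩ => not_Icc_subset_union_of_solutionFree hq hA hB
      (Icc_subset_colorClass_zero_union_one χ _)⟩
  · rintro N ⟨-, hN⟩
    by_contra! hlt
    exact hN (extremalColoring q) ⟨solutionFree_colorClass_extremalColoring_zero (by omega),
      solutionFree_colorClass_extremalColoring_one (by omega)⟩
end

section
/- RR_2(5,3) = 73. That is, 73 is the least positive integer N such that every 2-coloring χ of {1,…,N} admits x, y, z ∈ {1,…,N} with 2x + 5y = z and χ(x) = χ(y) = χ(z) = 0, or x, y, z ∈ {1,…,N} with 2x + 3y = z and χ(x) = χ(y) = χ(z) = 1. -/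
/-!
*Lower bound.* For `t ≤ s ≤ q`, give color `0` to the block `[t + s, (t + q)(t + s))` and color `1`
to everything else. A solution of `tx + qy = z` with `x, y` in the block has `z` beyond the block. A
solution of `tx + sy = z` with `x, y` below the block has `z` inside it, and if `x` or `y` lies
beyond the block, then `z ≥ t(t + q)(t + s) + s`, which is `73` for `(t, q, s) = (2, 5, 3)`.

*Upper bound.* If a coloring avoids all the solutions, then `1` and `(t + q)(t + s)` share a color,
and `t + q` and `t + s` have the other one. For `(2, 5, 3)` these are `1, 35` and `7, 5`. Each of
the two possible colors of `1` then forces the colors of further integers up to a contradiction.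
-/

/-- The equation `t * x + q * y = z` has a solution in `{1, …, N}`, not necessarily with distinct
entries, all of whose entries have color `c` under `χ`. -/
def HasMonoSolution {κ : Type*} (χ : ℕ → κ) (c : κ) (t q N : ℕ) : Prop :=
  ∃ x y z : ℕ, x ∈ Finset.Icc 1 N ∧ y ∈ Finset.Icc 1 N ∧ z ∈ Finset.Icc 1 N ∧
    t * x + q * y = z ∧ χ x = c ∧ χ y = c ∧ χ z = c

/-- `χ` is a coloring with the colors `c` and `d` that shows `N < RR_t(q, s)`: in `{1, …, N}` there
is no solution of `t * x + q * y = z` of color `c` and none of `t * x + s * y = z` of color `d`.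
The colors are parameters so that the two equations can be exchanged. -/
structure IsAvoiding {κ : Type*} (χ : ℕ → κ) (c d : κ) (t q s N : ℕ) : Prop where
  eq_or_eq : ∀ n, χ n = c ∨ χ n = d
  not_left : ¬ HasMonoSolution χ c t q N
  not_right : ¬ HasMonoSolution χ d t s N

namespace IsAvoiding

variable {κ : Type*} {χ : ℕ → κ} {c d : κ} {t q s N : ℕ}

theorem symm (A : IsAvoiding χ c d t q s N) : IsAvoiding χ d c t s q N :=
  ⟨fun n => (A.eq_or_eq n).symm, A.not_right, A.not_left⟩

theorem eq_right_of_ne (A : IsAvoiding χ c d t q s N) {n : ℕ} (h : χ n ≠ c) : χ n = d :=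
  (A.eq_or_eq n).resolve_left h

theorem false_of_eq_left (A : IsAvoiding χ c d t q s N) (x y z : ℕ)
    (hx : χ x = c) (hy : χ y = c) (hz : χ z = c) (h : t * x + q * y = z := by norm_num)
    (hxN : x ∈ Finset.Icc 1 N := by exact Finset.mem_Icc.2 ⟨by omega, by omega⟩)
    (hyN : y ∈ Finset.Icc 1 N := by exact Finset.mem_Icc.2 ⟨by omega, by omega⟩)
    (hzN : z ∈ Finset.Icc 1 N := by exact Finset.mem_Icc.2 ⟨by omega, by omega⟩) : False :=
  A.not_left ⟨x, y, z, hxN, hyN, hzN, h, hx, hy, hz⟩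

theorem color_add_left (A : IsAvoiding χ c d t q s N) (ht : 0 < t) (hN : t + q ≤ N)
    (h1 : χ 1 = c) : χ (t + q) = d :=
  A.eq_right_of_ne fun h => A.false_of_eq_left 1 1 (t + q) h1 h1 h

theorem color_add_mul_add (A : IsAvoiding χ c d t q s N) (ht : 0 < t)
    (hN : (t + q) * (t + s) ≤ N) (h1 : χ 1 = c) : χ ((t + q) * (t + s)) = c := by
  have hle : t + q ≤ (t + q) * (t + s) := Nat.le_mul_of_pos_right _ (by omega)
  have hadd : χ (t + q) = d := A.color_add_left ht (hle.trans hN) h1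
  exact A.symm.eq_right_of_ne fun h =>
    A.symm.false_of_eq_left (t + q) (t + q) _ hadd hadd h (by ring)

theorem color_add_right (A : IsAvoiding χ c d t q s N) (ht : 0 < t)
    (hN : (t + q) * (t + s) ≤ N) (h1 : χ 1 = c) : χ (t + s) = d := by
  have hle : t + s ≤ (t + q) * (t + s) := Nat.le_mul_of_pos_left _ (by omega)
  have hmul : χ ((t + q) * (t + s)) = c := A.color_add_mul_add ht hN h1
  exact A.eq_right_of_ne fun h => A.false_of_eq_left (t + s) (t + s) _ h h hmul (by ring)

theorem one_ne_left_of_two_five_three (A : IsAvoiding χ c d 2 5 3 N) (hN : 67 ≤ N) :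
    χ 1 ≠ c := fun h1 => by
  have h7 : χ 7 = d := A.color_add_left (by norm_num) (by omega) h1
  have h35 : χ 35 = c := A.color_add_mul_add (by norm_num) (by omega) h1
  have h5 : χ 5 = d := A.color_add_right (by norm_num) (by omega) h1
  have h15 : χ 15 = d := A.eq_right_of_ne fun h => A.false_of_eq_left 15 1 35 h h1 h35
  have h51 : χ 51 = c := A.symm.eq_right_of_ne fun h => A.symm.false_of_eq_left 15 7 51 h15 h7 h
  have h23 : χ 23 = d := A.eq_right_of_ne fun h => A.false_of_eq_left 23 1 51 h h1 h51
  have h67 : χ 67 = c := A.symm.eq_right_of_ne fun h => A.symm.false_of_eq_left 23 7 67 h23 h7 h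
  have h31 : χ 31 = c := A.symm.eq_right_of_ne fun h => A.symm.false_of_eq_left 5 7 31 h5 h7 h
  exact A.false_of_eq_left 31 1 67 h31 h1 h67

theorem one_ne_left_of_two_three_five (A : IsAvoiding χ c d 2 3 5 N) (hN : 73 ≤ N) :
    χ 1 ≠ c := fun h1 => by
  have h5 : χ 5 = d := A.color_add_left (by norm_num) (by omega) h1
  have h35 : χ 35 = c := A.color_add_mul_add (by norm_num) (by omega) h1
  have h7 : χ 7 = d := A.color_add_right (by norm_num) (by omega) h1
  have h11 : χ 11 = d := A.eq_right_of_ne fun h => A.false_of_eq_left 1 11 35 h1 h h35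
  have h45 : χ 45 = c := A.symm.eq_right_of_ne fun h => A.symm.false_of_eq_left 5 7 45 h5 h7 h
  have h9 : χ 9 = d := A.eq_right_of_ne fun h => A.false_of_eq_left 9 9 45 h h h45
  have h73 : χ 73 = d := A.eq_right_of_ne fun h => A.false_of_eq_left 35 1 73 h35 h1 h
  exact A.symm.false_of_eq_left 9 11 73 h9 h11 h73

theorem lt_of_two_five_three (A : IsAvoiding χ c d 2 5 3 N) : N < 73 := by
  by_contra! hN
  exact (A.eq_or_eq 1).elim (A.one_ne_left_of_two_five_three (by omega))
    (A.symm.one_ne_left_of_two_three_five hN)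

end IsAvoiding

/-- The coloring giving color `0` to the integers in `[a, b)` and color `1` to all others. -/
def blockColoring (a b n : ℕ) : Fin 2 :=
  if n ∈ Set.Ico a b then 0 else 1

section BlockColoring

variable {a b t q s N : ℕ}

theorem blockColoring_eq_zero_iff {n : ℕ} : blockColoring a b n = 0 ↔ a ≤ n ∧ n < b := by
  simp [blockColoring]

theorem blockColoring_eq_one_iff {n : ℕ} : blockColoring a b n = 1 ↔ n < a ∨ b ≤ n := by
  simp [blockColoring, imp_iff_not_or]

theorem not_hasMonoSolution_blockColoring_zero (hb : b ≤ (t + q) * a) :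
    ¬ HasMonoSolution (blockColoring a b) 0 t q N := by
  rintro ⟨x, y, z, -, -, -, rfl, hx, hy, hz⟩
  rw [blockColoring_eq_zero_iff] at hx hy hz
  refine hz.2.not_ge ?_
  calc b ≤ (t + q) * a := hb
    _ = t * a + q * a := add_mul t q a
    _ ≤ t * x + q * y := by gcongr; exacts [hx.1, hy.1]

theorem not_hasMonoSolution_blockColoring_one (hts : t ≤ s) (hb : (t + s) * (t + s - 1) < b)
    (hN : N < t * b + s) : ¬ HasMonoSolution (blockColoring (t + s) b) 1 t s N := by
  rintro ⟨x, y, z, hxN, hyN, hzN, rfl, hx, hy, hz⟩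
  rw [Finset.mem_Icc] at hxN hyN hzN
  rw [blockColoring_eq_one_iff] at hx hy hz
  rcases hx with hx | hx
  · rcases hy with hy | hy
    · have add_le : t + s ≤ t * x + s * y :=
        add_le_add (Nat.le_mul_of_pos_right t hxN.1) (Nat.le_mul_of_pos_right s hyN.1)
      have lt_b : t * x + s * y < b := calc
        t * x + s * y ≤ t * (t + s - 1) + s * (t + s - 1) := by gcongr <;> omega
        _ = (t + s) * (t + s - 1) := (add_mul _ _ _).symm
        _ < b := hb
      omega
    · have : t * b + s ≤ t * x + s * y := calc
        t * b + s ≤ t * 1 + s * b := by nlinarith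
        _ ≤ t * x + s * y := by gcongr; exact hxN.1
      omega
  · have : t * b + s ≤ t * x + s * y :=
      add_le_add (Nat.mul_le_mul_left t hx) (Nat.le_mul_of_pos_right s hyN.1)
    omega

theorem isAvoiding_blockColoring (hts : t ≤ s) (hsq : s ≤ q)
    (hN : N < t * ((t + q) * (t + s)) + s) :
    IsAvoiding (blockColoring (t + s) ((t + q) * (t + s))) 0 1 t q s N where
  eq_or_eq n := by omega
  not_left := not_hasMonoSolution_blockColoring_zero le_rfl
  not_right := by
    refine not_hasMonoSolution_blockColoring_one hts ?_ hN
    have hs : 0 < s := by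
      by_contra! hs
      simp [Nat.le_zero.1 hs, Nat.le_zero.1 (hts.trans hs)] at hN
    calc (t + s) * (t + s - 1) < (t + s) * (t + q) := by gcongr; omega
      _ = (t + q) * (t + s) := mul_comm _ _

end BlockColoring

/-- `RR_2(5,3) = 73`: the least positive `N` such that every 2-coloring of
`{1,…,N}` admits a solution to `2x + 5y = z` monochromatic of color 0 or a
solution to `2x + 3y = z` monochromatic of color 1 is `73`. -/
theorem RR_2_5_3 :
    IsLeast {N : ℕ | 0 < N ∧ ∀ χ : ℕ → Fin 2,
      (∃ x y z : ℕ, x ∈ Finset.Icc 1 N ∧ y ∈ Finset.Icc 1 N ∧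
        z ∈ Finset.Icc 1 N ∧ 2 * x + 5 * y = z ∧ χ x = 0 ∧ χ y = 0 ∧ χ z = 0) ∨
      (∃ x y z : ℕ, x ∈ Finset.Icc 1 N ∧ y ∈ Finset.Icc 1 N ∧
        z ∈ Finset.Icc 1 N ∧ 2 * x + 3 * y = z ∧ χ x = 1 ∧ χ y = 1 ∧ χ z = 1)}
      73 := by
  refine ⟨⟨by norm_num, fun χ => ?_⟩, fun N ⟨_, hN⟩ => ?_⟩
  · by_contra h
    obtain ⟨not_zero, not_one⟩ := not_or.1 h
    have A : IsAvoiding χ 0 1 2 5 3 73 := ⟨fun n => by omega, not_zero, not_one⟩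
    exact A.lt_of_two_five_three.false
  · by_contra! hlt
    have A : IsAvoiding (blockColoring 5 35) 0 1 2 5 3 N :=
      isAvoiding_blockColoring (t := 2) (q := 5) (s := 3) (by norm_num) (by norm_num) hlt
    exact (hN _).elim A.not_left A.not_right
end
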